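/- arXiv:1407.1139 — 2 statements merged into one kernel-verified Lean document; each statement's English description precedes it below -/
import Mathlib

section
/- For every continuous 2π-periodic function f, the convolutions (A_ε * f)(x) := ∫_0^{2π} A_ε(x - t) f(t) dt converge uniformly on ℝ to f as ε → 0⁺. -/
open Real Filter

/-- The kernel `A_ε(x) = (1/(2π)) ∑_{j ∈ ℤ} e^{ijx}/cosh(εj)`. -/
noncomputable def Aker (ε x : ℝ) : ℂ :=
  (1/(2*π : ℂ)) * ∑' j : ℤ, Complex.exp (Complex.I * j * x) / (Real.cosh (ε * j) : ℂ)

lemma cosh_sub_le {e : ℝ} (h0 : 0 < e) (h1 : e ≤ 1) : Real.cosh e - 1 ≤ e ^ 2 := by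
  have h := Real.cosh_le_exp_half_sq e
  have h2 := Real.abs_exp_sub_one_le (x := e ^ 2 / 2) (by rw [abs_of_nonneg (by positivity)]; nlinarith)
  rw [abs_of_nonneg (a := e ^ 2 / 2) (by positivity)] at h2
  have := le_abs_self (Real.exp (e ^ 2 / 2) - 1)
  linarith

lemma second_diff {e : ℝ} (h0 : 0 < e) (h1 : e ≤ 1) (u : ℝ) :
    |2 * (Real.cosh u)⁻¹ - (Real.cosh (u - e))⁻¹ - (Real.cosh (u + e))⁻¹| ≤ 8 * e ^ 2 * (Real.cosh u)⁻¹ := by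
  have hc := cosh_sub_le h0 h1
  have hce := Real.one_le_cosh e
  have hcu := Real.one_le_cosh u
  have hs : Real.sinh e ^ 2 = Real.cosh e ^ 2 - 1 := by rw [Real.cosh_sq]; ring
  have hs2 : Real.sinh u ^ 2 = Real.cosh u ^ 2 - 1 := by rw [Real.cosh_sq]; ring
  have hp : Real.cosh (u - e) * Real.cosh (u + e) = Real.cosh u ^ 2 + Real.sinh e ^ 2 := by
    rw [Real.cosh_sub, Real.cosh_add]
    have : (Real.cosh u * Real.cosh e - Real.sinh u * Real.sinh e) * (Real.cosh u * Real.cosh e + Real.sinh u * Real.sinh e) = Real.cosh u ^ 2 * Real.cosh e ^ 2 - Real.sinh u ^ 2 * Real.sinh e ^ 2 := by ring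
    rw [this, hs2, hs]; ring
  have hsum : Real.cosh (u - e) + Real.cosh (u + e) = 2 * Real.cosh u * Real.cosh e := by
    rw [Real.cosh_sub, Real.cosh_add]; ring
  have p1 := Real.cosh_pos (u - e)
  have p2 := Real.cosh_pos (u + e)
  have p3 := Real.cosh_pos u
  have key : 2 * (Real.cosh u)⁻¹ - (Real.cosh (u - e))⁻¹ - (Real.cosh (u + e))⁻¹
      = (2 * Real.sinh e ^ 2 - 2 * Real.cosh u ^ 2 * (Real.cosh e - 1)) / (Real.cosh u ^ 2 + Real.sinh e ^ 2) * (Real.cosh u)⁻¹ := by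
    have : 2 * (Real.cosh u)⁻¹ - (Real.cosh (u - e))⁻¹ - (Real.cosh (u + e))⁻¹ =
       (2 * (Real.cosh (u - e) * Real.cosh (u + e)) - Real.cosh u * (Real.cosh (u - e) + Real.cosh (u + e))) / (Real.cosh (u - e) * Real.cosh (u + e)) * (Real.cosh u)⁻¹ := by
      field_simp
      ring
    rw [this, hp, hsum]
    congr 2
    ring
  rw [key, abs_mul, abs_of_pos (inv_pos.2 p3)]
  gcongr
  have hd : 0 < Real.cosh u ^ 2 + Real.sinh e ^ 2 := by positivity
  rw [abs_div, abs_of_pos hd, div_le_iff₀ hd]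
  have hse : Real.sinh e ^ 2 ≤ 3 * e ^ 2 := by
    have : Real.cosh e ≤ 2 := by nlinarith
    have : (Real.cosh e - 1) * (Real.cosh e + 1) ≤ e ^ 2 * 3 := by gcongr; linarith
    rw [hs]; linarith
  have hs0 := sq_nonneg (Real.sinh e)
  have a1 : Real.cosh u ^ 2 * (Real.cosh e - 1) ≤ Real.cosh u ^ 2 * e ^ 2 := by gcongr
  have a2 : 0 ≤ Real.cosh u ^ 2 * (Real.cosh e - 1) := mul_nonneg (sq_nonneg _) (by linarith)
  have a3 : e ^ 2 ≤ Real.cosh u ^ 2 * e ^ 2 := le_mul_of_one_le_left (sq_nonneg _) (by nlinarith)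
  have a4 : 0 ≤ e ^ 2 * Real.sinh e ^ 2 := by positivity
  rw [abs_le]
  constructor <;> nlinarith

lemma inv_cosh_le (u : ℝ) : (Real.cosh u)⁻¹ ≤ 2 * Real.exp (-|u|) := by
  rw [Real.exp_neg, ← Real.cosh_abs, inv_le_iff_one_le_mul₀ (Real.cosh_pos _), Real.cosh_eq]
  have := Real.exp_pos |u|
  have := Real.exp_pos (-|u|)
  rw [← div_eq_mul_inv] at *
  field_simp
  linarith

lemma sum_bound {e : ℝ} (h0 : 0 < e) (h1 : e ≤ 1) :
    Summable (fun j : ℤ => (Real.cosh (e * j))⁻¹) ∧ ∑' j : ℤ, (Real.cosh (e * j))⁻¹ ≤ 8 / e := by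
  have hr0 := Real.exp_pos (-e)
  have hr1 : Real.exp (-e) ≤ 1 - e / 2 := by
    rw [Real.exp_neg]
    have := Real.add_one_le_exp e
    rw [inv_le_iff_one_le_mul₀ (Real.exp_pos _)]
    nlinarith
  have hg := hasSum_geometric_of_lt_one hr0.le (by linarith : Real.exp (-e) < 1)
  have hh : HasSum (fun j : ℤ => 2 * Real.exp (-|e * j|))
      (2 * (1 - Real.exp (-e))⁻¹ + 2 * Real.exp (-e) * (1 - Real.exp (-e))⁻¹) := by
    apply HasSum.of_nat_of_neg_add_one
    · have h := hg.mul_left 2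
      refine (congrArg (fun F : ℕ → ℝ => HasSum F (2 * (1 - Real.exp (-e))⁻¹)) (funext fun n => ?_)).mp h
      symm
      rw [← Real.exp_nat_mul, abs_of_nonneg (by positivity)]
      push_cast; ring_nf
    · have h := hg.mul_left (2 * Real.exp (-e))
      refine (congrArg (fun F : ℕ → ℝ => HasSum F (2 * Real.exp (-e) * (1 - Real.exp (-e))⁻¹)) (funext fun n => ?_)).mp h
      symm
      rw [← Real.exp_nat_mul, mul_assoc, ← Real.exp_add, abs_of_nonpos]
      · push_cast; ring_nf
      · push_cast; nlinarith [(Nat.cast_nonneg n : (0:ℝ) ≤ n)]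
  have hs : Summable (fun j : ℤ => (Real.cosh (e * j))⁻¹) :=
    Summable.of_nonneg_of_le (fun j => (inv_pos.2 (Real.cosh_pos _)).le) (fun j => inv_cosh_le _) hh.summable
  refine ⟨hs, ?_⟩
  have h2 := hs.tsum_le_tsum (fun j => inv_cosh_le _) hh.summable
  rw [hh.tsum_eq] at h2
  have h3 : (1 - Real.exp (-e))⁻¹ ≤ 2 / e := by
    rw [inv_le_comm₀ (by linarith) (by positivity)]
    rw [inv_div]; linarith
  have h4 : 0 < (1 - Real.exp (-e))⁻¹ := inv_pos.2 (by linarith)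
  have h5 : 8 / e = 4 * (2 / e) := by ring
  rw [h5]; nlinarith

noncomputable def G (ε x : ℝ) : ℂ := ∑' j : ℤ, Complex.exp (Complex.I * j * x) / (Real.cosh (ε * j) : ℂ)

lemma norm_term (e x : ℝ) (j : ℤ) :
    ‖Complex.exp (Complex.I * j * x) / (Real.cosh (e * j) : ℂ)‖ = (Real.cosh (e * j))⁻¹ := by
  rw [norm_div, Complex.norm_real, Real.norm_eq_abs, abs_of_pos (Real.cosh_pos _), Complex.norm_exp]
  simp

lemma G_cont {e : ℝ} (h0 : 0 < e) (h1 : e ≤ 1) : Continuous (G e) := by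
  unfold G
  refine continuous_tsum (fun j => by fun_prop) (sum_bound h0 h1).1 (fun j x => (norm_term e x j).le)

lemma G_bound1 {e : ℝ} (h0 : 0 < e) (h1 : e ≤ 1) (x : ℝ) : ‖G e x‖ ≤ 8 / e := by
  refine le_trans (tsum_of_norm_bounded (sum_bound h0 h1).1.hasSum (fun j => (norm_term e x j).le)) (sum_bound h0 h1).2

lemma G_bound2 {e : ℝ} (h0 : 0 < e) (h1 : e ≤ 1) (x : ℝ) :
    (2 - 2 * Real.cos x) * ‖G e x‖ ≤ 64 * e := by
  have hsn : Summable (fun j : ℤ => Complex.exp (Complex.I * j * x) / (Real.cosh (e * j) : ℂ)) :=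
    Summable.of_norm_bounded (sum_bound h0 h1).1 (fun j => (norm_term e x j).le)
  have hs := hsn.hasSum
  have hp := ((Equiv.addRight (1:ℤ)).hasSum_iff.2 hs).mul_left (Complex.exp (-(Complex.I * x)))
  have hm := ((Equiv.addRight (-1:ℤ)).hasSum_iff.2 hs).mul_left (Complex.exp (Complex.I * x))
  have h := ((hs.mul_left 2).sub hm).sub hp
  have hc : (2:ℂ) * G e x - Complex.exp (Complex.I * x) * G e x - Complex.exp (-(Complex.I * x)) * G e x
      = ((2 - 2 * Real.cos x : ℝ) : ℂ) * G e x := by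
    push_cast
    rw [Complex.cos]
    ring_nf
  have hb : ‖((2 - 2 * Real.cos x : ℝ) : ℂ) * G e x‖ ≤ 8 * e ^ 2 * ∑' j : ℤ, (Real.cosh (e * j))⁻¹ := by
    rw [← hc]
    unfold G
    rw [← h.tsum_eq]
    refine tsum_of_norm_bounded ((sum_bound h0 h1).1.hasSum.mul_left _) (fun j => ?_)
    have e1 : 2 * (Complex.exp (Complex.I * j * x) / (Real.cosh (e * j) : ℂ))
       - Complex.exp (Complex.I * x) * ((fun j : ℤ => Complex.exp (Complex.I * j * x) / (Real.cosh (e * j) : ℂ)) ∘ (Equiv.addRight (-1:ℤ))) j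
       - Complex.exp (-(Complex.I * x)) * ((fun j : ℤ => Complex.exp (Complex.I * j * x) / (Real.cosh (e * j) : ℂ)) ∘ (Equiv.addRight (1:ℤ))) j
       = Complex.exp (Complex.I * j * x) * ((2 * (Real.cosh (e*j))⁻¹ - (Real.cosh (e*j - e))⁻¹ - (Real.cosh (e*j + e))⁻¹ : ℝ) : ℂ) := by
      simp only [Function.comp, Equiv.coe_addRight]
      rw [← mul_div_assoc, ← mul_div_assoc, ← mul_div_assoc, ← Complex.exp_add, ← Complex.exp_add]
      have q1 : Complex.I * x + Complex.I * ((j + -1 : ℤ):ℂ) * x = Complex.I * j * x := by push_cast; ring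
      have q2 : -(Complex.I * x) + Complex.I * ((j + 1 : ℤ):ℂ) * x = Complex.I * j * x := by push_cast; ring
      have q3 : e * ((j + -1 : ℤ):ℝ) = e * j - e := by push_cast; ring
      have q4 : e * ((j + 1 : ℤ):ℝ) = e * j + e := by push_cast; ring
      rw [q1, q2, q3, q4]
      simp only [Complex.ofReal_sub, Complex.ofReal_mul, Complex.ofReal_inv, Complex.ofReal_ofNat]
      ring
    rw [e1, norm_mul, Complex.norm_real, Complex.norm_exp]
    simpa using second_diff h0 h1 (e * j)
  rw [norm_mul, Complex.norm_real, Real.norm_eq_abs, abs_of_nonneg (by linarith [Real.cos_le_one x])] at hb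
  refine hb.trans ?_
  calc _ ≤ 8 * e ^ 2 * (8 / e) := by gcongr; exact (sum_bound h0 h1).2
    _ = 64 * e := by field_simp; norm_num

lemma G_bound {e : ℝ} (h0 : 0 < e) (h1 : e ≤ 1) (x : ℝ) (hx : |x| ≤ π) :
    (e ^ 2 + x ^ 2) * ‖G e x‖ ≤ 1000 * e := by
  have b1 := G_bound1 h0 h1 x
  have b2 := G_bound2 h0 h1 x
  have hc := Real.cos_le_one_sub_mul_cos_sq hx
  have hpi := Real.pi_le_four
  have hpp := Real.pi_pos
  have hn := norm_nonneg (G e x)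
  have b3 : e ^ 2 * ‖G e x‖ ≤ 8 * e := by
    calc _ ≤ e ^ 2 * (8 / e) := by gcongr
      _ = _ := by field_simp
  have b4 : x ^ 2 / 4 ≤ 2 - 2 * Real.cos x := by
    have : (1:ℝ)/16 ≤ 1 / π ^ 2 := by
      apply one_div_le_one_div_of_le (by positivity); nlinarith
    have h5 : 2 / π ^ 2 * x ^ 2 = 2 * (1 / π ^ 2 * x ^ 2) := by ring
    have : (1:ℝ)/16 * x ^ 2 ≤ 1 / π ^ 2 * x ^ 2 := by gcongr
    rw [h5] at hc
    linarith
  have b5 : x ^ 2 / 4 * ‖G e x‖ ≤ 64 * e := le_trans (by gcongr) b2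
  linarith

lemma G_periodic (e : ℝ) : Function.Periodic (G e) (2 * π) := by
  intro x
  unfold G
  congr 1; ext j
  congr 1
  rw [Complex.exp_eq_exp_iff_exists_int]
  exact ⟨j, by push_cast; ring⟩

lemma int_exp (j : ℤ) : ∫ x in (-π)..π, Complex.exp (Complex.I * j * x) = if j = 0 then 2 * π else 0 := by
  split_ifs with h
  · subst h; simp; ring
  · rw [integral_exp_mul_complex (by simp [h])]
    rw [Complex.ofReal_zero, div_eq_zero_iff, sub_eq_zero]
    left
    rw [Complex.exp_eq_exp_iff_exists_int]
    exact ⟨j, by push_cast; ring⟩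

lemma G_int {e : ℝ} (h0 : 0 < e) (h1 : e ≤ 1) : ∫ x in (-π)..π, G e x = 2 * π := by
  have h := intervalIntegral.hasSum_integral_of_dominated_convergence (μ := MeasureTheory.volume)
    (a := -π) (b := π)
    (F := fun (j : ℤ) (x : ℝ) => Complex.exp (Complex.I * j * x) / (Real.cosh (e * j) : ℂ)) (f := G e)
    (fun j _ => (Real.cosh (e * j))⁻¹)
    (fun j => (by fun_prop : Continuous _).aestronglyMeasurable)
    (fun j => .of_forall fun x _ => (norm_term e x j).le)
    (.of_forall fun x _ => (sum_bound h0 h1).1)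
    (by simp)
    (.of_forall fun x _ => (Summable.of_norm_bounded (sum_bound h0 h1).1 (fun j => (norm_term e x j).le)).hasSum)
  rw [← h.tsum_eq]
  simp_rw [intervalIntegral.integral_div, int_exp]
  rw [tsum_eq_single 0]
  · simp
  · intro j hj; simp [hj]

lemma int_poisson {e : ℝ} (h0 : 0 < e) : ∫ x in (-π)..π, e / (e ^ 2 + x ^ 2) ≤ 4 := by
  have hd : ∀ x ∈ Set.uIcc (-π) π, HasDerivAt (fun x => Real.arctan (x / e)) (e / (e ^ 2 + x ^ 2)) x := by
    intro x _
    have h := ((hasDerivAt_id' x).div_const e).arctan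
    have hq : e / (e ^ 2 + x ^ 2) = 1 / (1 + (x / e) ^ 2) * (1 / e) := by
      field_simp
    rw [hq]
    exact h
  rw [intervalIntegral.integral_eq_sub_of_hasDerivAt hd]
  · have := Real.arctan_lt_pi_div_two (π / e)
    have := Real.neg_pi_div_two_lt_arctan (-π / e)
    have := Real.pi_le_four
    linarith
  · apply Continuous.intervalIntegrable
    exact continuous_const.div (by fun_prop) (fun x => by positivity)

lemma periodic_uc (f : ℝ → ℝ) (hf : Continuous f) (hfp : Function.Periodic f (2*π)) :
    UniformContinuous f := by
  have : Fact (0 < 2 * π) := ⟨by positivity⟩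
  have hl : Continuous (hfp.lift : AddCircle (2 * π) → ℝ) := continuous_coinduced_dom.mpr hf
  have hu := CompactSpace.uniformContinuous_of_continuous hl
  have hq : UniformContinuous (fun x : ℝ => (x : AddCircle (2 * π))) :=
    uniformContinuous_of_continuousAt_zero (QuotientAddGroup.mk' (AddSubgroup.zmultiples (2 * π)))
      (AddCircle.continuous_mk' (2 * π)).continuousAt
  exact hu.comp hq

lemma f_mod (f : ℝ → ℝ) (hf : Continuous f) (hfp : Function.Periodic f (2*π)) (η : ℝ) (hη : 0 < η) :
    ∃ K : ℝ, 0 ≤ K ∧ ∀ x t, |f (x - t) - f x| ≤ η + K * t ^ 2 := by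
  obtain ⟨M, hM⟩ : ∃ M, ∀ x, |f x| ≤ M := by
    have := hfp.compact_of_continuous (by positivity) hf
    obtain ⟨M, hM⟩ := this.isBounded.exists_norm_le
    exact ⟨M, fun x => hM _ ⟨x, rfl⟩⟩
  have hu : UniformContinuous f := periodic_uc f hf hfp
  obtain ⟨δ, hδ, h⟩ := Metric.uniformContinuous_iff.1 hu η hη
  have hM0 : 0 ≤ M := (abs_nonneg _).trans (hM 0)
  refine ⟨2 * M / δ ^ 2, by positivity, fun x t => ?_⟩
  by_cases ht : |t| < δ
  · have := h (a := x - t) (b := x) (by rw [Real.dist_eq]; simpa using ht)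
    rw [Real.dist_eq] at this
    have : 0 ≤ 2 * M / δ ^ 2 * t ^ 2 := by positivity
    linarith
  · have h2 : |f (x - t) - f x| ≤ 2 * M := by
      have := abs_sub (f (x - t)) (f x); linarith [hM (x - t), hM x]
    have h3 : δ ^ 2 ≤ t ^ 2 := by
      rw [← sq_abs t]; have := not_lt.1 ht; gcongr
    have : 2 * M ≤ 2 * M / δ ^ 2 * t ^ 2 := by
      rw [div_mul_eq_mul_div, le_div_iff₀ (by positivity)]; gcongr
    linarith

theorem stmt5 (f : ℝ → ℝ) (hf : Continuous f) (hfp : Function.Periodic f (2*π)) :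
    TendstoUniformly
      (fun (ε : ℝ) (x : ℝ) => ∫ t in (0:ℝ)..(2*π), Aker ε (x - t) * (f t : ℂ))
      (fun x => (f x : ℂ)) (nhdsWithin 0 (Set.Ioi 0)) := by
  have main : ∀ e : ℝ, 0 < e → e ≤ 1 → ∀ η K : ℝ, 0 < η → 0 ≤ K →
      (∀ x t, |f (x - t) - f x| ≤ η + K * t ^ 2) → ∀ x,
      ‖(f x : ℂ) - ∫ t in (0:ℝ)..(2*π), Aker e (x - t) * (f t : ℂ)‖ ≤ 4000 * η + 8000 * K * e := by
    intro e h0 h1 η K hη hK hm x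
    have hG := G_cont h0 h1
    have hpi : (π : ℂ) ≠ 0 := by exact_mod_cast Real.pi_ne_zero
    have s1 : ∫ t in (0:ℝ)..(2*π), Aker e (x - t) * (f t : ℂ)
        = (1/(2*π : ℂ)) * ∫ s in (-π)..π, G e s * (f (x - s) : ℂ) := by
      have := intervalIntegral.integral_comp_sub_left (a := 0) (b := 2 * π) (fun s => G e s * (f (x - s) : ℂ)) x
      simp only [sub_sub_cancel] at this
      have hper : Function.Periodic (fun s => G e s * (f (x - s) : ℂ)) (2 * π) := by
        intro s
        simp only [G_periodic e s]
        rw [← sub_sub, hfp.sub_eq]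
      have h2 := hper.intervalIntegral_add_eq (x - 2 * π) (-π)
      have q1 : x - 2 * π + 2 * π = x - 0 := by ring
      have q2 : -π + 2 * π = π := by ring
      rw [q1, q2, ← this] at h2
      rw [← h2, ← intervalIntegral.integral_const_mul]
      simp only [Aker, G, mul_assoc]
    have s2 : (f x : ℂ) = (1/(2*π : ℂ)) * ∫ s in (-π)..π, G e s * (f x : ℂ) := by
      rw [intervalIntegral.integral_mul_const, G_int h0 h1]
      field_simp
    have hcf : Continuous fun s => G e s * (f (x - s) : ℂ) := by fun_prop
    have hcx : Continuous fun s => G e s * (f x : ℂ) := by fun_prop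
    rw [s1]
    nth_rw 1 [s2]
    rw [← mul_sub, ← intervalIntegral.integral_sub (hcx.intervalIntegrable _ _) (hcf.intervalIntegrable _ _)]
    have hle : -π ≤ π := by linarith [Real.pi_pos]
    have hcp : Continuous fun s : ℝ => e / (e ^ 2 + s ^ 2) :=
      continuous_const.div (by fun_prop) (fun x => by positivity)
    have hB : ‖∫ s in (-π)..π, (G e s * (f x : ℂ) - G e s * (f (x - s) : ℂ))‖
        ≤ ∫ s in (-π)..π, (1000 * η * (e / (e ^ 2 + s ^ 2)) + 1000 * K * e) := by
      refine intervalIntegral.norm_integral_le_of_norm_le hle (.of_forall fun s hs => ?_)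
        (Continuous.intervalIntegrable (by fun_prop) _ _)
      have hb := G_bound h0 h1 s (abs_le.2 ⟨hs.1.le, hs.2⟩)
      have hd : 0 < e ^ 2 + s ^ 2 := by positivity
      have hb1 : ‖G e s‖ ≤ 1000 * (e / (e ^ 2 + s ^ 2)) := by
        rw [← mul_div_assoc, le_div_iff₀ hd]; linarith
      have hb2 : s ^ 2 * ‖G e s‖ ≤ 1000 * e := by
        have : 0 ≤ e ^ 2 * ‖G e s‖ := by positivity
        linarith
      rw [← mul_sub, norm_mul, ← Complex.ofReal_sub, Complex.norm_real, Real.norm_eq_abs, abs_sub_comm]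
      calc _ ≤ ‖G e s‖ * (η + K * s ^ 2) := by gcongr; exact hm x s
        _ = η * ‖G e s‖ + K * (s ^ 2 * ‖G e s‖) := by ring
        _ ≤ η * (1000 * (e / (e ^ 2 + s ^ 2))) + K * (1000 * e) := by gcongr
        _ = _ := by ring
    rw [intervalIntegral.integral_add (Continuous.intervalIntegrable (by fun_prop) _ _) (by simp),
      intervalIntegral.integral_const_mul, intervalIntegral.integral_const, smul_eq_mul] at hB
    have hp := int_poisson h0
    have hB2 : ‖∫ s in (-π)..π, (G e s * (f x : ℂ) - G e s * (f (x - s) : ℂ))‖ ≤ 4000 * η + 8000 * K * e := by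
      have t1 : 1000 * η * ∫ s in (-π)..π, e / (e ^ 2 + s ^ 2) ≤ 1000 * η * 4 := by gcongr
      have t2 : (π - -π) * (1000 * K * e) ≤ 8 * (1000 * K * e) := by
        gcongr; linarith [Real.pi_le_four]
      linarith
    rw [norm_mul]
    have hn : ‖(1/(2*π : ℂ))‖ ≤ 1 := by
      rw [norm_div, norm_mul, Complex.norm_real, Real.norm_eq_abs, abs_of_pos Real.pi_pos]
      simp only [norm_one, Complex.norm_ofNat]
      rw [div_le_one (by positivity)]
      linarith [Real.pi_gt_three]
    exact le_trans (mul_le_of_le_one_left (norm_nonneg _) hn) hB2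
  rw [Metric.tendstoUniformly_iff]
  intro r hr
  obtain ⟨K, hK, hm⟩ := f_mod f hf hfp (r / 16000) (by positivity)
  have hpos : 0 < min 1 (r / (32000 * (K + 1))) := by positivity
  filter_upwards [Ioc_mem_nhdsGT hpos] with e he x
  rw [dist_eq_norm]
  have he1 := he.2.trans (min_le_left _ _)
  have he2 := he.2.trans (min_le_right _ _)
  refine lt_of_le_of_lt (main e he.1 he1 _ K (by positivity) hK hm x) ?_
  rw [le_div_iff₀ (by positivity)] at he2
  have := he.1
  nlinarith
end

section
/- (Variation diminishing property of A_ε) For ε > 0 and any continuous 2π-periodic function f, the number of sign changes per period of A_ε * f is at most the number of sign changes per period of f: ν(A_ε * f) ≤ ν(f). -/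
open Real

open Filter Topology in
theorem cosh_prod (x : ℝ) :
    Tendsto (fun n : ℕ => ∏ m ∈ Finset.range n, (1 + (2 * x / (2 * (m:ℝ) + 1)) ^ 2)) atTop
      (𝓝 (Real.cosh (π * x))) := by
  rcases eq_or_ne x 0 with rfl | hx
  · simp
  have key : ∀ y : ℝ, Tendsto (fun n : ℕ => π * y * ∏ j ∈ Finset.range n, ((1 : ℝ) + y ^ 2 / ((j : ℝ) + 1) ^ 2))
      atTop (𝓝 (Real.sinh (π * y))) := by
    intro y
    have h := (Complex.tendsto_euler_sin_prod (y * Complex.I)).mul_const (-Complex.I)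
    have h2 := (Complex.continuous_re.tendsto _).comp h
    have e : (Complex.sin (π * (y * Complex.I)) * (-Complex.I)).re = Real.sinh (π * y) := by
      rw [← mul_assoc, Complex.sin_mul_I, mul_assoc]
      simp only [mul_neg, Complex.I_mul_I, neg_neg, mul_one]
      rw [← Complex.ofReal_mul, Complex.sinh_ofReal_re]
    rw [e] at h2
    refine h2.congr fun n => ?_
    have : (∏ j ∈ Finset.range n, ((1 : ℂ) - (y * Complex.I) ^ 2 / ((j : ℂ) + 1) ^ 2)) =
      ((∏ j ∈ Finset.range n, ((1 : ℝ) + y ^ 2 / ((j : ℝ) + 1) ^ 2) : ℝ) : ℂ) := by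
      push_cast
      refine Finset.prod_congr rfl fun j _ => ?_
      rw [mul_pow, Complex.I_sq]; ring
    simp only [Function.comp]
    rw [this]
    set P := ∏ j ∈ Finset.range n, ((1 : ℝ) + y ^ 2 / ((j : ℝ) + 1) ^ 2)
    have : (π * (y * Complex.I) * (P:ℂ) * (-Complex.I)) = ((π * y * P : ℝ) : ℂ) := by
      push_cast
      linear_combination (-(π:ℂ) * y * P) * Complex.I_mul_I
    rw [this, Complex.ofReal_re]
  have hs : Real.sinh (π * x) ≠ 0 := by
    rw [Ne, Real.sinh_eq_zero]; exact mul_ne_zero Real.pi_ne_zero hx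
  have h1 := (key (2 * x)).comp (tendsto_id.const_mul_atTop' (by norm_num : 0 < 2) : Tendsto (fun n : ℕ => 2 * n) atTop atTop)
  have h2 := (h1.div (key x) hs).mul_const (1/2)
  have e : Real.sinh (π * (2 * x)) / Real.sinh (π * x) * (1/2) = Real.cosh (π * x) := by
    rw [show π * (2 * x) = 2 * (π * x) by ring, Real.sinh_two_mul]; field_simp
  rw [e] at h2
  refine h2.congr fun n => ?_
  have hprod : (∏ j ∈ Finset.range (2 * n), ((1 : ℝ) + (2 * x) ^ 2 / ((j : ℝ) + 1) ^ 2)) =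
      (∏ m ∈ Finset.range n, (1 + (2 * x / (2 * (m:ℝ) + 1)) ^ 2)) *
      ∏ j ∈ Finset.range n, ((1 : ℝ) + x ^ 2 / ((j : ℝ) + 1) ^ 2) := by
    induction n with
    | zero => simp
    | succ n ih =>
      rw [show 2 * (n+1) = 2 * n + 1 + 1 by ring, Finset.prod_range_succ, Finset.prod_range_succ, ih,
        Finset.prod_range_succ, Finset.prod_range_succ]
      have : (2 * x) ^ 2 / (((2 * n + 1 : ℕ) : ℝ) + 1) ^ 2 = x ^ 2 / ((n:ℝ) + 1) ^ 2 := by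
        push_cast; field_simp; ring
      rw [this]; push_cast; rw [div_pow]; ring
  have hP : (∏ j ∈ Finset.range n, ((1 : ℝ) + x ^ 2 / ((j : ℝ) + 1) ^ 2)) ≠ 0 :=
    Finset.prod_ne_zero_iff.2 fun j _ => by positivity
  simp only [Function.comp, Pi.div_apply, id]
  rw [hprod]
  have := Real.pi_ne_zero
  field_simp

theorem solve1 (c : ℝ) (hc : c ≠ 0) (f : ℝ → ℝ) (hf : Continuous f)
    (hfp : Function.Periodic f (2*π)) :
    ∃ g : ℝ → ℝ, Function.Periodic g (2*π) ∧ ∀ x, HasDerivAt g ((f x - g x) / c) x := by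
  set q : ℝ → ℝ := fun s => Real.exp (s / c) * (f s / c) with hq
  have hqc : Continuous q := by fun_prop
  set I := ∫ s in (0:ℝ)..(2*π), q s with hI
  set E := Real.exp (-(2 * π) / c) with hE
  have hE1 : 1 - E ≠ 0 := by
    rw [sub_ne_zero, ne_comm, hE, Ne, Real.exp_eq_one_iff]
    exact div_ne_zero (by have := Real.pi_pos; linarith) hc
  set K := E * I / (1 - E) with hK
  set g : ℝ → ℝ := fun x => Real.exp (-x / c) * (K + ∫ s in (0:ℝ)..x, q s) with hg
  have hd : ∀ x, HasDerivAt g ((f x - g x) / c) x := by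
    intro x
    have h1 : HasDerivAt (fun x => ∫ s in (0:ℝ)..x, q s) (q x) x :=
      intervalIntegral.integral_hasDerivAt_right (hqc.intervalIntegrable _ _)
        (hqc.stronglyMeasurableAtFilter _ _) hqc.continuousAt
    have h2 : HasDerivAt (fun x : ℝ => Real.exp (-x / c)) (Real.exp (-x / c) * (-1 / c)) x :=
      ((hasDerivAt_id x).neg.div_const c).exp
    convert! h2.mul (h1.const_add K) using 1
    simp only [hq, hg]
    have : Real.exp (-x / c) * Real.exp (x / c) = 1 := by
      rw [← Real.exp_add]; simp [neg_div]
    linear_combination (-(f x / c)) * this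
  have g0 : g (2 * π) = g 0 := by
    simp only [hg, ← hI, ← hE]
    simp [hK]
    field_simp
    ring
  refine ⟨g, ?_, hd⟩
  set h : ℝ → ℝ := fun x => Real.exp (x / c) * (g (x + 2 * π) - g x) with hh
  have hhd : ∀ x, HasDerivAt h 0 x := by
    intro x
    have h2 : HasDerivAt (fun x : ℝ => Real.exp (x / c)) (Real.exp (x / c) * (1 / c)) x :=
      ((hasDerivAt_id x).div_const c).exp
    convert! h2.mul (((hd (x + 2 * π)).comp_add_const x (2*π)).sub (hd x)) using 1
    simp only [Pi.sub_apply]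
    rw [hfp x]
    ring
  have hconst := is_const_of_deriv_eq_zero (fun x => (hhd x).differentiableAt) (fun x => (hhd x).deriv)
  intro x
  have := hconst x 0
  simp only [hh, zero_add, g0, sub_self, mul_zero] at this
  have := (mul_eq_zero.1 this).resolve_left (Real.exp_pos _).ne'
  linarith

/-- Fourier integrals. -/
noncomputable def FF (f : ℝ → ℝ) (j : ℤ) : ℂ :=
  ∫ t in (0:ℝ)..(2*π), Complex.exp (-(Complex.I * j * t)) * (f t : ℂ)

/-- at least 2k cyclic sign changes. -/
def SC (k : ℕ) (f : ℝ → ℝ) : Prop :=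
  ∃ (v : ℕ → ℝ) (s : ℝ), (∀ i < 2 * k, v i < v (i+1)) ∧ v (2 * k) = v 0 + 2 * π ∧
    ∀ i ≤ 2 * k, 0 < s * (-1) ^ i * f (v i)

theorem FF_rel (c : ℝ) (hc : c ≠ 0) (f g : ℝ → ℝ) (hf : Continuous f)
    (hgp : Function.Periodic g (2*π)) (hg : ∀ x, HasDerivAt g ((f x - g x) / c) x) (j : ℤ) :
    FF f j = (1 + c * Complex.I * j) * FF g j := by
  have hgc : Continuous g := continuous_iff_continuousAt.2 fun x => (hg x).continuousAt
  have hd : ∀ x : ℝ, HasDerivAt (fun t : ℝ => Complex.exp (-(Complex.I * j * t)) * (g t : ℂ))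
      ((-(Complex.I * j) - 1 / c) * (Complex.exp (-(Complex.I * j * x)) * (g x : ℂ))
        + (1 / c) * (Complex.exp (-(Complex.I * j * x)) * (f x : ℂ))) x := by
    intro x
    have h1 : HasDerivAt (fun t : ℝ => Complex.exp (-(Complex.I * j * t)))
        (Complex.exp (-(Complex.I * j * x)) * (-(Complex.I * j * 1))) x := by
      have : HasDerivAt (fun t : ℝ => (t : ℂ)) 1 x := Complex.ofRealCLM.hasDerivAt
      exact ((this.const_mul (Complex.I * j)).neg).cexp
    convert! h1.mul (hg x).ofReal_comp using 1
    push_cast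
    ring
  have e := intervalIntegral.integral_eq_sub_of_hasDerivAt (a := 0) (b := 2 * π) (fun x _ => hd x)
    (Continuous.intervalIntegrable (by fun_prop) _ _)
  rw [intervalIntegral.integral_add (Continuous.intervalIntegrable (by fun_prop) _ _)
    (Continuous.intervalIntegrable (by fun_prop) _ _), intervalIntegral.integral_const_mul,
    intervalIntegral.integral_const_mul] at e
  have hb : Complex.exp (-(Complex.I * j * ((2 * π : ℝ) : ℂ))) = 1 := by
    rw [Complex.exp_eq_one_iff]
    exact ⟨-j, by push_cast; ring⟩
  rw [hb] at e
  have : g (2 * π) = g 0 := by have := hgp 0; rwa [zero_add] at this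
  rw [this] at e
  simp only [Complex.ofReal_zero, mul_zero, neg_zero, Complex.exp_zero, sub_self] at e
  change _ * FF g j + _ * FF f j = 0 at e
  have hc' : (c : ℂ) ≠ 0 := by exact_mod_cast hc
  field_simp at e
  linear_combination e

theorem SC_step (c : ℝ) (hc : c ≠ 0) (f g : ℝ → ℝ) (hfp : Function.Periodic f (2*π))
    (hg : ∀ x, HasDerivAt g ((f x - g x) / c) x) (k : ℕ) (h : SC k g) : SC k f := by
  obtain ⟨v, s, hv, hp, hs⟩ := h
  have hk : 0 < k := by
    rcases Nat.eq_zero_or_pos k with rfl | h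
    · simp at hp
    · exact h
  have hd : ∀ x, HasDerivAt (fun x => Real.exp (x / c) * g x) (Real.exp (x / c) * (f x / c)) x := by
    intro x
    have h2 : HasDerivAt (fun x : ℝ => Real.exp (x / c)) (Real.exp (x / c) * (1 / c)) x :=
      ((hasDerivAt_id x).div_const c).exp
    convert! h2.mul (hg x) using 1
    ring
  have hc0 : Continuous (fun x => Real.exp (x / c) * g x) :=
    continuous_iff_continuousAt.2 fun x => (hd x).continuousAt
  have hex : ∀ i, ∃ w, i < 2 * k → v i < w ∧ w < v (i+1) ∧ 0 < (-s / c) * (-1) ^ i * f w := by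
    intro i
    by_cases hi : i < 2 * k
    · obtain ⟨w, ⟨hw1, hw2⟩, hw⟩ := exists_hasDerivAt_eq_slope _ _ (hv i hi) hc0.continuousOn
        (fun x _ => hd x)
      refine ⟨w, fun _ => ⟨hw1, hw2, ?_⟩⟩
      have a := hs i hi.le
      have b := hs (i+1) hi
      have hl : 0 < v (i+1) - v i := sub_pos.2 (hv i hi)
      rw [eq_div_iff hl.ne'] at hw
      have ea := mul_pos (Real.exp_pos (v i / c)) a
      have eb := mul_pos (Real.exp_pos (v (i+1) / c)) b
      have hew := Real.exp_pos (w / c)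
      have : 0 < (Real.exp (w / c) * (v (i+1) - v i)) * ((-s / c) * (-1) ^ i * f w) := by
        have : (Real.exp (w / c) * (v (i+1) - v i)) * ((-s / c) * (-1) ^ i * f w)
          = (-s) * (-1)^i * (Real.exp (w / c) * (f w / c) * (v (i + 1) - v i)) := by ring
        rw [this, hw]
        rw [pow_succ] at eb
        linarith
      exact pos_of_mul_pos_right this (by positivity)
    · exact ⟨0, fun h => absurd h hi⟩
  choose w hw using hex
  refine ⟨fun i => if i < 2 * k then w i else w 0 + 2 * π, -s / c, ?_, ?_, ?_⟩
  · intro i hi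
    simp only [hi, if_true]
    split_ifs with h'
    · exact (hw i hi).2.1.trans (hw (i+1) h').1
    · have : i + 1 = 2 * k := by omega
      have h1 := (hw i hi).2.1
      have h2 := (hw 0 (by omega)).1
      rw [this, hp] at h1
      linarith
  · simp [hk]
  · intro i hi
    dsimp only
    split_ifs with h'
    · exact (hw i h').2.2
    · have : i = 2 * k := by omega
      have h2 := (hw 0 (by omega)).2.2
      rw [hfp, this, pow_mul]
      simpa using h2

theorem step2 (c : ℝ) (hc : c ≠ 0) (f : ℝ → ℝ) (hf : Continuous f)
    (hfp : Function.Periodic f (2*π)) :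
    ∃ g : ℝ → ℝ, Continuous g ∧ Function.Periodic g (2*π) ∧ (∀ k, SC k g → SC k f) ∧
      ∀ j : ℤ, FF f j = ((1 + (c * j) ^ 2 : ℝ) : ℂ) * FF g j := by
  obtain ⟨h, hhp, hh⟩ := solve1 c hc f hf hfp
  have hhc : Continuous h := continuous_iff_continuousAt.2 fun x => (hh x).continuousAt
  obtain ⟨g, hgp, hg⟩ := solve1 (-c) (neg_ne_zero.2 hc) h hhc hhp
  refine ⟨g, continuous_iff_continuousAt.2 fun x => (hg x).continuousAt, hgp, fun k hk => ?_, fun j => ?_⟩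
  · exact SC_step c hc f h hfp hh k (SC_step (-c) (neg_ne_zero.2 hc) h g hhp hg k hk)
  · rw [FF_rel c hc f h hf hhp hh, FF_rel (-c) (neg_ne_zero.2 hc) h g hhc hgp hg]
    push_cast
    linear_combination (-(c:ℂ)^2 * j^2 * FF g j) * Complex.I_mul_I

theorem FF_inv (g : ℝ → ℝ) (hg : Continuous g) (hgp : Function.Periodic g (2*π))
    (hs : Summable (FF g)) (x : ℝ) :
    HasSum (fun j : ℤ => (1 / (2 * π : ℂ)) * FF g j * Complex.exp (Complex.I * j * x)) (g x : ℂ) := by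
  haveI : Fact (0 < 2 * π) := ⟨Real.two_pi_pos⟩
  have hp : Function.Periodic (fun x => (g x : ℂ)) (2 * π) := fun x => by simp [hgp x]
  let F : C(AddCircle (2 * π), ℂ) := ⟨hp.lift, by
    refine continuous_coinduced_dom.2 ?_
    exact Complex.continuous_ofReal.comp hg⟩
  have hF : ∀ x : ℝ, F (x : AddCircle (2 * π)) = (g x : ℂ) := fun x => rfl
  have hπ : (π : ℂ) ≠ 0 := by exact_mod_cast Real.pi_ne_zero
  have hco : ∀ j, fourierCoeff F j = (1 / (2 * π : ℂ)) * FF g j := by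
    intro j
    rw [fourierCoeff_eq_intervalIntegral F j 0, zero_add, FF, Complex.real_smul]
    push_cast
    congr 1
    refine intervalIntegral.integral_congr fun t _ => ?_
    simp only [fourier_coe_apply, smul_eq_mul, hF]
    congr 2
    push_cast
    field_simp
  have := has_pointwise_sum_fourier_series_of_summable (f := F)
    (by simp_rw [funext hco]; exact hs.mul_left _) (x : AddCircle (2 * π))
  rw [hF] at this
  convert! this using 2 with j
  rw [hco, smul_eq_mul, fourier_coe_apply]
  congr 2
  push_cast
  field_simp

theorem sumL (a : ℝ) (ha : a ≠ 0) : Summable fun j : ℤ => 1 / (1 + (a * j) ^ 2) := by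
  have h : Summable fun j : ℤ => (1 / a ^ 2) * (1 / (j:ℝ) ^ 2) :=
    (Real.summable_one_div_int_pow.2 (by norm_num)).mul_left _
  refine Summable.of_norm_bounded_eventually h ?_
  have : {(0:ℤ)}ᶜ ∈ Filter.cofinite := (Set.finite_singleton (0:ℤ)).compl_mem_cofinite
  filter_upwards [this] with j hj
  have hj' : (j:ℝ) ≠ 0 := by exact_mod_cast hj
  rw [Real.norm_of_nonneg (by positivity), one_div_mul_one_div]
  apply one_div_le_one_div_of_le (by positivity)
  nlinarith

theorem sumCosh (ε : ℝ) (hε : 0 < ε) : Summable fun j : ℤ => 1 / Real.cosh (ε * j) := by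
  refine Summable.of_nonneg_of_le (fun j => by have := Real.cosh_pos (ε * j); positivity) (fun j => ?_)
    ((sumL (ε/2) (by positivity)).mul_left 2)
  rw [mul_one_div, div_le_div_iff₀ (Real.cosh_pos _) (by positivity)]
  have h1 := Real.quadratic_le_exp_of_nonneg (abs_nonneg (ε * j))
  rw [← Real.cosh_abs, Real.cosh_eq]
  have h2 := Real.exp_pos (-|ε * j|)
  have h3 := abs_nonneg (ε * j)
  have h4 := sq_abs (ε * j)
  nlinarith

theorem G_sum (ε : ℝ) (hε : 0 < ε) (f : ℝ → ℝ) (hf : Continuous f) (M : ℝ) (hM : ∀ x, |f x| ≤ M) (x : ℝ) :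
    HasSum (fun j : ℤ => (1 / (2 * π : ℂ)) * (FF f j / (Real.cosh (ε * j) : ℂ)) * Complex.exp (Complex.I * j * x))
      (∫ t in (0:ℝ)..(2*π), Aker ε (x - t) * (f t : ℂ)) := by
  have hn : ∀ (j : ℤ) (y : ℝ), ‖Complex.exp (Complex.I * j * y) / (Real.cosh (ε * j) : ℂ)‖ = 1 / Real.cosh (ε * j) := by
    intro j y
    rw [norm_div, Complex.norm_real, Real.norm_of_nonneg (Real.cosh_pos _).le,
      show Complex.I * j * y = ((j * y : ℝ) : ℂ) * Complex.I by push_cast; ring, Complex.norm_exp_ofReal_mul_I]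
  have hsum : ∀ y : ℝ, Summable fun j : ℤ => Complex.exp (Complex.I * j * y) / (Real.cosh (ε * j) : ℂ) := by
    intro y
    apply Summable.of_norm
    simp_rw [hn]
    exact sumCosh ε hε
  have key := intervalIntegral.hasSum_integral_of_dominated_convergence (μ := MeasureTheory.volume)
    (a := 0) (b := 2 * π)
    (F := fun (j : ℤ) (t : ℝ) => (1 / (2 * π : ℂ)) *
      (Complex.exp (Complex.I * j * ((x - t : ℝ) : ℂ)) / (Real.cosh (ε * j) : ℂ)) * (f t : ℂ))
    (f := fun t => Aker ε (x - t) * (f t : ℂ))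
    (fun j t => ‖(1 / (2 * π : ℂ))‖ * (1 / Real.cosh (ε * j)) * M)
    (fun j => by
      apply Continuous.aestronglyMeasurable
      fun_prop)
    (fun j => Filter.Eventually.of_forall fun t _ => by
      rw [norm_mul, norm_mul, hn, Complex.norm_real, Real.norm_eq_abs]
      have := Real.cosh_pos (ε * j)
      gcongr
      exact hM t)
    (Filter.Eventually.of_forall fun t _ => ((sumCosh ε hε).mul_left _).mul_right _)
    intervalIntegrable_const
    (Filter.Eventually.of_forall fun t _ => by
      exact ((hsum (x - t)).hasSum.mul_left _).mul_right _)
  convert! key using 2 with j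
  rw [FF, ← intervalIntegral.integral_div, ← intervalIntegral.integral_const_mul,
    ← intervalIntegral.integral_mul_const]
  refine intervalIntegral.integral_congr fun t _ => ?_
  rw [show Complex.I * j * ((x - t : ℝ) : ℂ) = -(Complex.I * j * t) + Complex.I * j * x by push_cast; ring,
    Complex.exp_add]
  ring

theorem FF_bound (f : ℝ → ℝ) (M : ℝ) (hM : ∀ x, |f x| ≤ M) (j : ℤ) : ‖FF f j‖ ≤ M * (2 * π) := by
  have := intervalIntegral.norm_integral_le_of_norm_le_const (a := 0) (b := 2 * π) (C := M)
    (f := fun t : ℝ => Complex.exp (-(Complex.I * j * t)) * (f t : ℂ)) (fun t _ => by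
      rw [norm_mul, show -(Complex.I * j * t) = ((-(j * t) : ℝ) : ℂ) * Complex.I by push_cast; ring,
        Complex.norm_exp_ofReal_mul_I, one_mul, Complex.norm_real]
      exact hM t)
  rwa [sub_zero, abs_of_pos Real.two_pi_pos] at this

theorem seqN (c : ℕ → ℝ) (hc : ∀ m, c m ≠ 0) (f : ℝ → ℝ) (hf : Continuous f)
    (hfp : Function.Periodic f (2*π)) (N : ℕ) :
    ∃ g : ℝ → ℝ, Continuous g ∧ Function.Periodic g (2*π) ∧ (∀ k, SC k g → SC k f) ∧
      ∀ j : ℤ, FF f j = ((∏ m ∈ Finset.range N, (1 + (c m * j) ^ 2) : ℝ) : ℂ) * FF g j := by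
  induction N with
  | zero => exact ⟨f, hf, hfp, fun _ h => h, fun j => by simp⟩
  | succ N ih =>
    obtain ⟨g, h1, h2, h3, h4⟩ := ih
    obtain ⟨g', h1', h2', h3', h4'⟩ := step2 (c N) (hc N) g h1 h2
    refine ⟨g', h1', h2', fun k hk => h3 k (h3' k hk), fun j => ?_⟩
    rw [h4, h4', Finset.prod_range_succ]
    push_cast; ring

open Filter Topology in
theorem approx (ε : ℝ) (hε : 0 < ε) (f : ℝ → ℝ) (hf : Continuous f)
    (hfp : Function.Periodic f (2*π))
    (G : ℝ → ℝ) (hG : ∀ x, (G x : ℂ) = ∫ t in (0:ℝ)..(2*π), Aker ε (x - t) * (f t : ℂ)) :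
    ∃ g : ℕ → ℝ → ℝ, (∀ N, Function.Periodic (g N) (2*π)) ∧ (∀ N k, SC k (g N) → SC k f) ∧
      ∀ x, Tendsto (fun N => g N x) atTop (𝓝 (G x)) := by
  obtain ⟨M, hM⟩ : ∃ M, ∀ x, |f x| ≤ M := by
    obtain ⟨M, hM⟩ := isCompact_Icc.exists_bound_of_continuousOn (s := Set.Icc 0 (2 * π)) hf.continuousOn
    refine ⟨M, fun x => ?_⟩
    obtain ⟨y, hy, hxy⟩ := hfp.exists_mem_Ico₀ Real.two_pi_pos x
    rw [hxy]
    exact hM y ⟨hy.1, hy.2.le⟩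
  have hM0 : 0 ≤ M := (abs_nonneg _).trans (hM 0)
  set c : ℕ → ℝ := fun m => 2 * ε / π / (2 * m + 1) with hcd
  have hc : ∀ m, c m ≠ 0 := fun m => by have := Real.pi_pos; simp only [hcd]; positivity
  set P : ℕ → ℤ → ℝ := fun N j => ∏ m ∈ Finset.range N, (1 + (c m * j) ^ 2) with hP
  have hPpos : ∀ N j, 0 < P N j := fun N j => Finset.prod_pos fun m _ => by positivity
  have hPlim : ∀ j, Tendsto (fun N => P N j) atTop (𝓝 (Real.cosh (ε * j))) := by
    intro j
    have := cosh_prod (ε * j / π)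
    rw [mul_div_cancel₀ _ Real.pi_ne_zero] at this
    refine this.congr fun N => Finset.prod_congr rfl fun m _ => ?_
    simp only [hcd]; congr 2; ring
  have hPge : ∀ N, 1 ≤ N → ∀ j : ℤ, 1 + (c 0 * j) ^ 2 ≤ P N j := by
    intro N hN j
    induction N, hN using Nat.le_induction with
    | base => simp [hP]
    | succ N hN ih =>
      simp only [hP] at ih ⊢
      rw [Finset.prod_range_succ]
      exact ih.trans (le_mul_of_one_le_right (hPpos N j).le (by nlinarith [sq_nonneg (c N * j)]))
  choose g hg1 hg2 hg3 hg4 using seqN c hc f hf hfp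
  refine ⟨g, hg2, hg3, fun x => ?_⟩
  have hFg : ∀ N j, FF (g N) j = FF f j / (P N j : ℂ) := by
    intro N j
    have : (P N j : ℂ) ≠ 0 := by exact_mod_cast (hPpos N j).ne'
    exact eq_div_of_mul_eq this (by rw [hg4 N j, mul_comm])
  have hb : ∀ N, 1 ≤ N → ∀ j, ‖FF (g N) j‖ ≤ M * (2 * π) * (1 / (1 + (c 0 * j) ^ 2)) := by
    intro N hN j
    rw [hFg, norm_div, Complex.norm_real, Real.norm_of_nonneg (hPpos N j).le, mul_one_div]
    have := FF_bound f M hM j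
    have h2 := hPge N hN j
    have := Real.pi_pos
    gcongr
  have hsb : Summable fun j : ℤ => M * (2 * π) * (1 / (1 + (c 0 * j) ^ 2)) := (sumL _ (hc 0)).mul_left _
  have hsum : ∀ N, 1 ≤ N → HasSum (fun j : ℤ => (1 / (2 * π : ℂ)) * FF (g N) j * Complex.exp (Complex.I * j * x)) (g N x : ℂ) :=
    fun N hN => FF_inv (g N) (hg1 N) (hg2 N) (Summable.of_norm_bounded hsb (hb N hN)) x
  have hGs := G_sum ε hε f hf M hM x
  rw [← hG] at hGs
  have hne : ∀ j : ℤ, ‖Complex.exp (Complex.I * j * x)‖ = 1 := fun j => by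
    rw [show Complex.I * j * x = ((j * x : ℝ) : ℂ) * Complex.I by push_cast; ring, Complex.norm_exp_ofReal_mul_I]
  have key := tendsto_tsum_of_dominated_convergence (𝓕 := atTop)
    (f := fun (N : ℕ) (j : ℤ) => (1 / (2 * π : ℂ)) * FF (g N) j * Complex.exp (Complex.I * j * x))
    (g := fun j : ℤ => (1 / (2 * π : ℂ)) * (FF f j / (Real.cosh (ε * j) : ℂ)) * Complex.exp (Complex.I * j * x))
    (hsb.mul_left ‖(1 / (2 * π : ℂ))‖)
    (fun j => by
      refine (Tendsto.const_mul _ ?_).mul_const _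
      simp_rw [hFg]
      refine Tendsto.div tendsto_const_nhds ?_ ?_
      · exact (Complex.continuous_ofReal.tendsto _).comp (hPlim j)
      · exact_mod_cast (Real.cosh_pos _).ne')
    (by
      filter_upwards [eventually_ge_atTop 1] with N hN j
      rw [norm_mul, hne, mul_one, norm_mul]
      exact mul_le_mul_of_nonneg_left (hb N hN j) (norm_nonneg _))
  rw [hGs.tsum_eq] at key
  have key2 : Tendsto (fun N => (g N x : ℂ)) atTop (𝓝 (G x : ℂ)) := by
    refine key.congr' ?_
    filter_upwards [eventually_ge_atTop 1] with N hN
    exact (hsum N hN).tsum_eq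
  exact (Complex.continuous_re.tendsto _).comp key2

theorem stmt15 (ε : ℝ) (hε : 0 < ε) (f : ℝ → ℝ) (hf : Continuous f)
    (hfp : Function.Periodic f (2*π))
    (G : ℝ → ℝ) (hG : ∀ x, (G x : ℂ) = ∫ t in (0:ℝ)..(2*π), Aker ε (x - t) * (f t : ℂ))
    (n : ℕ) (t : Fin (n+1) → ℝ) (ht : StrictMono t) (htl : t (Fin.last n) - t 0 < 2*π)
    (hsc : ∀ i : Fin n, G (t i.castSucc) * G (t i.succ) < 0) :
    ∃ u : Fin (n+1) → ℝ, StrictMono u ∧ u (Fin.last n) - u 0 < 2*π ∧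
      ∀ i : Fin n, f (u i.castSucc) * f (u i.succ) < 0 := by
  rcases Nat.eq_zero_or_pos n with rfl | hn
  · exact ⟨t, ht, htl, fun i => i.elim0⟩
  obtain ⟨g, hgp, hgS, hgl⟩ := approx ε hε f hf hfp G hG
  obtain ⟨k, hk1, hk2⟩ : ∃ k, 2 * k ≤ n + 1 ∧ n ≤ 2 * k := ⟨(n+1)/2, by omega, by omega⟩
  set T : ℕ → ℝ := fun i => if h : i < n + 1 then t ⟨i, h⟩ else 0 with hT
  have hTt : ∀ i (h : i < n + 1), T i = t ⟨i, h⟩ := fun i h => by simp only [hT]; rw [dif_pos h]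
  have hTs : ∀ i < n, G (T i) * G (T (i+1)) < 0 := by
    intro i hi
    rw [hTt i (by omega), hTt (i+1) (by omega)]
    exact hsc ⟨i, hi⟩
  have hTm : ∀ i < n, T i < T (i+1) := by
    intro i hi
    rw [hTt i (by omega), hTt (i+1) (by omega)]
    exact ht (by simp [Fin.lt_def])
  have hTl : ∀ i < n + 1, T i < T 0 + 2 * π := by
    intro i hi
    rw [hTt i hi, hTt 0 (by omega)]
    have : t ⟨i, hi⟩ ≤ t (Fin.last n) := ht.monotone (Fin.le_last _)
    have h0 : t ⟨0, by omega⟩ = t 0 := rfl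
    rw [h0]
    linarith
  have hsign : ∀ i < n + 1, 0 < G (T 0) * (-1) ^ i * G (T i) := by
    intro i
    induction i with
    | zero =>
      intro _
      have : G (T 0) ≠ 0 := fun h => by have := hTs 0 hn; rw [h, zero_mul] at this; exact lt_irrefl _ this
      rw [pow_zero, mul_one]; exact mul_self_pos.2 this
    | succ i ih =>
      intro hi
      have a := ih (by omega)
      have b := hTs i (by omega)
      have c := mul_pos_of_neg_of_neg (a := G (T i) * G (T (i+1))) (b := - (G (T 0) * (-1) ^ i * G (T i))) b (by linarith)
      have h2 : 0 < (G (T i))^2 := by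
        have : G (T i) ≠ 0 := fun h => by rw [h, zero_mul] at b; exact lt_irrefl _ b
        positivity
      refine pos_of_mul_pos_right (a := (G (T i))^2) ?_ h2.le
      rw [pow_succ (-1 : ℝ)]; linarith
  have hev : ∀ᶠ N in Filter.atTop, ∀ i ∈ Finset.range (n+1), 0 < G (T 0) * (-1) ^ i * g N (T i) := by
    rw [Filter.eventually_all_finset]
    intro i hi
    exact ((hgl (T i)).const_mul (G (T 0) * (-1) ^ i)).eventually_const_lt (hsign i (Finset.mem_range.1 hi))
  obtain ⟨N, hN⟩ := hev.exists
  have hSC : SC k (g N) := by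
    refine ⟨fun i => if i < 2 * k then T i else T 0 + 2 * π, G (T 0), ?_, ?_, ?_⟩
    · intro i hi
      simp only [hi, if_true]
      split_ifs with h'
      · exact hTm i (by omega)
      · exact hTl i (by omega)
    · have : 0 < k := by omega
      simp [this]
    · intro i hi
      dsimp only
      split_ifs with h'
      · exact hN i (Finset.mem_range.2 (by omega))
      · have : i = 2 * k := by omega
        rw [hgp, this, pow_mul]
        simpa using hN 0 (by simp)
  obtain ⟨v, s, hv, hp, hs⟩ := hgS N k hSC
  -- a point slightly before the end
  obtain ⟨y, hy1, hy2, hy3⟩ : ∃ y, v (2 * k - 1) < y ∧ y < v (2 * k) ∧ 0 < s * (-1) ^ (2 * k) * f y := by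
    have h1 : ∀ᶠ y in nhdsWithin (v (2 * k)) (Set.Iio (v (2 * k))), 0 < s * (-1) ^ (2 * k) * f y := by
      apply nhdsWithin_le_nhds
      exact (continuous_const.mul hf).continuousAt.eventually_const_lt (hs (2 * k) le_rfl)
    have hlt : v (2 * k - 1) < v (2 * k) := by
      have := hv (2 * k - 1) (by omega)
      rwa [show 2 * k - 1 + 1 = 2 * k by omega] at this
    have h2 := Ioo_mem_nhdsLT hlt
    obtain ⟨y, hy, hy'⟩ := (h1.and h2).exists
    exact ⟨y, hy'.1, hy'.2, hy⟩
  set U : ℕ → ℝ := fun i => if i < 2 * k then v i else y with hU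
  have hUm : ∀ i < n, U i < U (i+1) := by
    intro i hi
    simp only [hU]
    rw [if_pos (by omega)]
    split_ifs with h'
    · exact hv i (by omega)
    · rwa [show i = 2 * k - 1 by omega]
  have hUs : ∀ i ≤ n, 0 < s * (-1) ^ i * f (U i) := by
    intro i hi
    simp only [hU]
    split_ifs with h'
    · exact hs i h'.le
    · rwa [show i = 2 * k by omega]
  have hvlt : ∀ i < 2 * k, v i < v (2 * k) := by
    intro i hi
    have : ∀ d, ∀ i, i + d + 1 = 2 * k → v i < v (2 * k) := by
      intro d
      induction d with
      | zero => intro i h; rw [← h]; exact hv i (by omega)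
      | succ d ih => intro i h; exact (hv i (by omega)).trans (ih (i+1) (by omega))
    exact this (2 * k - 1 - i) i (by omega)
  refine ⟨fun i => U i, Fin.strictMono_iff_lt_succ.2 fun i => ?_, ?_, fun i => ?_⟩
  · simpa using hUm i i.2
  · have h0 : U 0 = v 0 := by simp only [hU]; rw [if_pos (by omega)]
    have h1 : U n < v (2 * k) := by
      simp only [hU]
      split_ifs with h'
      · exact hvlt n h'
      · exact hy2
    simp only [Fin.val_last, Fin.val_zero]
    linarith
  · simp only [Fin.val_castSucc, Fin.val_succ]
    have a := hUs i i.2.le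
    have b := hUs (i+1) i.2
    have c := mul_pos a b
    have hs0 : s ≠ 0 := by rintro rfl; simp at a
    have e : ((-1:ℝ) ^ (i:ℕ)) * (-1) ^ (i:ℕ) = 1 := by rw [← mul_pow]; simp
    rw [pow_succ] at c
    have e2 : s * (-1) ^ (i:ℕ) * f (U i) * (s * ((-1) ^ (i:ℕ) * -1) * f (U (i + 1)))
      = s ^ 2 * (-(f (U i) * f (U (i+1)))) := by
      linear_combination (-s^2 * f (U i) * f (U (i+1))) * e
    rw [e2] at c
    have := pos_of_mul_pos_right c (by positivity)
    linarith
end
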